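/- For all integers k ≥ 1, R ≥ 1 and n with (k−1)R < n < kR, the matrix integral I_k(n;R) equals the binomial coefficient C(kR − n + k² − 1, k² − 1). -/

import Mathlib

open MeasureTheory Polynomial

noncomputable instance (R : ℕ) : MeasurableSpace (Matrix.unitaryGroup (Fin R) ℂ) := borel _
instance (R : ℕ) : BorelSpace (Matrix.unitaryGroup (Fin R) ℂ) := ⟨rfl⟩

/-- The trace of the `j`-th exterior power of `θ`, i.e. the coefficient of `T^j` in
`det(I + T·θ)`. -/
noncomputable def extPowTrace (R : ℕ) (θ : Matrix.unitaryGroup (Fin R) ℂ) (j : ℕ) : ℂ :=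
  ((1 + (X : ℂ[X]) • (θ : Matrix (Fin R) (Fin R) ℂ).map C).det).coeff j

/-- The matrix integral `I_k(n;R)`: the integral over the unitary group `U(R)` of
`|∑_{n₁+⋯+n_k=n} ∏ᵢ Tr(Λ^{nᵢ} θ)|²`, with respect to the measure `μ` (which in the
theorems below is assumed to be the Haar probability measure). The summands with some
`nᵢ > R` vanish, since `det(I + T·θ)` has degree `R`. -/
noncomputable def matrixIntegral (k n R : ℕ)
    (μ : Measure (Matrix.unitaryGroup (Fin R) ℂ)) : ℝ :=
  ∫ θ, ‖∑ x ∈ Finset.Nat.antidiagonalTuple k n, ∏ i, extPowTrace R θ (x i)‖ ^ 2 ∂μ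

/-!
Put `m = k * R - n`, so that `m ≤ R`. For unitary `θ` the functional equation of `det (1 + T θ)`
exchanges the coefficients of degrees `n` and `m` of its `k`-th power, up to conjugation and a
factor of modulus one. Applying the expansion of determinants along `Perm (Fin m)` to `θ ⊗ₖ 1`,
`m!` times the coefficient of degree `m` is `∑ σ, sign σ * k ^ c(σ) * p_σ(θ)`, where `c(σ)` is the
number of cycles of `σ` and `p_σ(θ)` is the product of the traces `Tr (θ ^ ℓ)` over the cycle
lengths `ℓ` of `σ`.

Averaging over the unitary group lands in the commutant of its action on the `m`-th tensor power,
which consists of combinations of permutations of the factors (Schur–Weyl). As `m ≤ R`, evaluating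
at pairwise distinct indices shows that `∫ p_σ * conj p_τ` is the number of `π` conjugating `σ`
to `τ` (Diaconis–Shahshahani). The integral is thus the average of `(k ^ 2) ^ c(σ)` over `σ`, which
by Burnside's lemma is the number of multisets of size `m` in a set with `k ^ 2` elements.
-/

section Colorings

open Equiv Finset

variable {α β K : Type*} [Fintype α]

lemma exists_perm_eq_comp_of_card_fiber_eq [DecidableEq β] {f g : α → β}
    (h : ∀ b, #{a | f a = b} = #{a | g a = b}) : ∃ σ : Perm α, f = g ∘ σ := by
  simp only [← Fintype.card_subtype] at h
  exact ⟨ofFiberEquiv fun b => Fintype.equivOfCardEq (h b),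
    funext fun a => (ofFiberEquiv_map _ a).symm⟩

lemma map_univ_val_eq_map_univ_val_iff {f g : α → β} :
    univ.val.map f = univ.val.map g ↔ ∃ σ : Perm α, f = g ∘ σ := by
  classical
  constructor
  · intro h
    refine exists_perm_eq_comp_of_card_fiber_eq fun b => ?_
    simpa only [Multiset.count_map, card_def, filter_val, eq_comm] using
      congrArg (Multiset.count b) h
  · rintro ⟨σ, rfl⟩
    rw [← Multiset.map_map]
    exact congrArg (fun s => s.val.map g) (map_univ_equiv σ)

lemma exists_map_univ_val_eq {s : Multiset β} (hs : s.card = Fintype.card α) :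
    ∃ f : α → β, univ.val.map f = s := by
  classical
  let e : α ≃ s.ToType := Fintype.equivOfCardEq (by rw [Multiset.card_coe, hs])
  refine ⟨fun a => (e a).1, ?_⟩
  conv_rhs => rw [← Multiset.map_univ_coe s, ← map_univ_equiv e]
  exact (Multiset.map_map _ _ _).symm

lemma natCard_orbits_perm_arrow :
    Nat.card (MulAction.orbitRel.Quotient (Perm α)ᵈᵐᵃ (α → K)) =
      (Nat.card K).multichoose (Fintype.card α) := by
  rw [← Sym.natCard_sym_eq_multichoose]
  refine Nat.card_eq_of_bijective (Quotient.lift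
    (fun f : α → K => (⟨univ.val.map f, by simp⟩ : Sym K (Fintype.card α))) ?_) ⟨?_, ?_⟩
  · rintro f g ⟨σ, rfl⟩
    exact Subtype.ext (map_univ_val_eq_map_univ_val_iff.2 ⟨DomMulAct.mk.symm σ, rfl⟩)
  · rintro ⟨f⟩ ⟨g⟩ h
    obtain ⟨σ, hσ⟩ := map_univ_val_eq_map_univ_val_iff.1 (Subtype.ext_iff.1 h)
    exact Quotient.sound ⟨DomMulAct.mk σ, hσ.symm⟩
  · rintro ⟨s, hs⟩
    obtain ⟨f, hf⟩ := exists_map_univ_val_eq hs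
    exact ⟨Quotient.mk _ f, Subtype.ext hf⟩

lemma sum_card_comp_perm_eq [DecidableEq α] [Fintype K] [DecidableEq K] :
    ∑ σ : Perm α, #{f : α → K | f ∘ σ = f} =
      (Fintype.card K).multichoose (Fintype.card α) * (Fintype.card α).factorial := by
  classical
  have : Fintype (Perm α)ᵈᵐᵃ := Fintype.ofEquiv _ DomMulAct.mk
  have burnside := MulAction.sum_card_fixedBy_eq_card_orbits_mul_card_group (Perm α)ᵈᵐᵃ (α → K)
  rw [← Nat.card_eq_fintype_card, natCard_orbits_perm_arrow,
    Nat.card_eq_fintype_card, ← Fintype.card_congr DomMulAct.mk,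
    Fintype.card_perm] at burnside
  rw [← burnside]
  refine Fintype.sum_equiv DomMulAct.mk _ _ fun σ => ?_
  rw [← Fintype.card_subtype]
  exact Fintype.card_congr (Equiv.refl _)

end Colorings

section PrincipalMinors

open Finset

variable {α N S : Type*} [Fintype α] [DecidableEq α] [CommRing S]

lemma card_filter_image_univ_eq [Fintype N] [DecidableEq N] {s : Finset N}
    (hs : #s = Fintype.card α) :
    #{φ : α → N | univ.image φ = s} = (Fintype.card α).factorial := by
  have e : α ≃ s := Fintype.equivOfCardEq (by rw [Fintype.card_coe, hs])
  rw [← Fintype.card_equiv e, ← Fintype.card_subtype]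
  refine (Fintype.card_of_bijective (f := fun ε : α ≃ s =>
    (⟨fun a => ε a, ?_⟩ : {φ : α → N // univ.image φ = s})) ⟨?_, ?_⟩).symm
  · ext x
    simpa using ⟨fun ⟨a, ha⟩ => ha ▸ (ε a).2, fun hx => ⟨ε.symm ⟨x, hx⟩, by simp⟩⟩
  · exact fun ε ε' h => Equiv.ext fun a => Subtype.ext (congrFun (Subtype.ext_iff.1 h) a)
  · rintro ⟨φ, rfl⟩
    have hφ : Function.Bijective fun a => (⟨φ a, by simp⟩ : univ.image φ) := by
      refine (Fintype.bijective_iff_surjective_and_card _).2 ⟨fun ⟨x, hx⟩ => ?_,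
        by rw [Fintype.card_coe, hs]⟩
      simpa using hx
    exact ⟨Equiv.ofBijective _ hφ, rfl⟩

lemma det_submatrix_eq_zero_of_not_injective (M : Matrix N N S) {φ : α → N}
    (hφ : ¬ Function.Injective φ) : (M.submatrix φ φ).det = 0 := by
  obtain ⟨a, b, hab, hne⟩ := Function.not_injective_iff.1 hφ
  exact Matrix.det_zero_of_row_eq hne (funext fun j => by simp [hab])

lemma det_submatrix_eq_det_submatrix_image [DecidableEq N] (M : Matrix N N S) {φ : α → N}
    (hφ : Function.Injective φ) :
    (M.submatrix φ φ).det =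
      (M.submatrix (Subtype.val : univ.image φ → N) (Subtype.val : univ.image φ → N)).det := by
  let e : α ≃ univ.image φ := Equiv.ofBijective (fun a => ⟨φ a, by simp⟩)
    ⟨fun a b h => hφ (Subtype.ext_iff.1 h), fun ⟨x, hx⟩ => by simpa using hx⟩
  exact (Matrix.det_submatrix_equiv_self e (M.submatrix Subtype.val Subtype.val))

variable [Fintype N] [DecidableEq N]

/-- The polynomial `det (1 + T M)`, whose coefficients are the traces of the exterior powers
of `M`. -/
noncomputable def extPowTracePoly (M : Matrix N N S) : S[X] := (1 + (X : S[X]) • M.map C).det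

lemma sum_det_submatrix (M : Matrix N N S) :
    ∑ φ : α → N, (M.submatrix φ φ).det =
      (Fintype.card α).factorial * (extPowTracePoly M).coeff (Fintype.card α) := by
  rw [extPowTracePoly, Matrix.coeff_det_one_add_X_smul_eq_sum_minors, mul_sum]
  have injective_iff (φ : α → N) :
      Function.Injective φ ↔ univ.image φ ∈ univ.powersetCard (Fintype.card α) := by
    rw [mem_powersetCard_univ, ← card_univ, card_image_iff, coe_univ, Set.injOn_univ]
  calc ∑ φ : α → N, (M.submatrix φ φ).det
      = ∑ φ : α → N with univ.image φ ∈ univ.powersetCard (Fintype.card α),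
          (M.submatrix φ φ).det := by
        refine (sum_filter_of_ne fun φ _ h => ?_).symm
        exact (injective_iff φ).1 (not_imp_comm.1 (det_submatrix_eq_zero_of_not_injective M) h)
    _ = ∑ s ∈ univ.powersetCard (Fintype.card α), ∑ φ : α → N with univ.image φ = s,
          (M.submatrix φ φ).det := (sum_fiberwise_eq_sum_filter _ _ _ _).symm
    _ = _ := sum_congr rfl fun s hs => by
        have hminor : ∀ φ ∈ ({φ | univ.image φ = s} : Finset (α → N)), (M.submatrix φ φ).det =
            (M.submatrix (Subtype.val : s → N) (Subtype.val : s → N)).det := by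
          rintro φ hφ
          obtain rfl := (mem_filter.1 hφ).2
          exact det_submatrix_eq_det_submatrix_image M ((injective_iff φ).2 hs)
        rw [sum_congr rfl hminor, sum_const, nsmul_eq_mul,
          card_filter_image_univ_eq (mem_powersetCard_univ.1 hs)]

end PrincipalMinors

section ExtPowTracePoly

open Matrix Kronecker

variable {N K S S' : Type*} [Fintype N] [DecidableEq N] [Fintype K] [DecidableEq K]
  [CommRing S] [CommRing S']

lemma extPowTracePoly_eq_charpolyRev_neg (M : Matrix N N S) :
    extPowTracePoly M = (-M).charpolyRev := by
  rw [extPowTracePoly, Matrix.charpolyRev, Matrix.map_neg _ (map_neg C), smul_neg, sub_neg_eq_add]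

lemma extPowTracePoly_map (M : Matrix N N S) (f : S →+* S') :
    extPowTracePoly (M.map f) = (extPowTracePoly M).map f := by
  rw [extPowTracePoly, extPowTracePoly, ← coe_mapRingHom, RingHom.map_det]
  congr 1
  ext i j : 1
  simp [Matrix.one_apply, apply_ite (Polynomial.map f)]

lemma extPowTracePoly_transpose (M : Matrix N N S) :
    extPowTracePoly Mᵀ = extPowTracePoly M := by
  rw [extPowTracePoly, extPowTracePoly, ← Matrix.det_transpose]
  simp [Matrix.transpose_map]

lemma extPowTracePoly_conjTranspose [StarRing S] (M : Matrix N N S) :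
    extPowTracePoly Mᴴ = (extPowTracePoly M).map (starRingEnd S) := by
  rw [← extPowTracePoly_map, ← extPowTracePoly_transpose]
  rfl

lemma extPowTracePoly_kronecker_one (M : Matrix N N S) :
    extPowTracePoly (M ⊗ₖ (1 : Matrix K K S)) = extPowTracePoly M ^ Fintype.card K := by
  have hmap : (M ⊗ₖ (1 : Matrix K K S)).map C = M.map C ⊗ₖ (1 : Matrix K K S[X]) := by
    ext ⟨i, a⟩ ⟨j, b⟩ : 2
    simp [Matrix.one_apply, apply_ite C]
  rw [extPowTracePoly, extPowTracePoly, hmap, ← Matrix.one_kronecker_one, ← smul_kronecker,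
    ← add_kronecker, det_kronecker, Matrix.det_one, one_pow, mul_one]

lemma extPowTracePoly_eq_C_det_mul_charpoly {M W : Matrix N N S} (h : M * W = 1) :
    extPowTracePoly M = C M.det * (-W).charpoly := by
  have hC : M.map C * W.map C = 1 := by
    rw [← Matrix.map_mul, h, Matrix.map_one _ (map_zero C) (map_one C)]
  rw [extPowTracePoly, charpoly, RingHom.map_det C, ← det_mul]
  congr 1
  rw [charmatrix, map_neg, sub_neg_eq_add, mul_add]
  simp only [RingHom.mapMatrix_apply, hC]
  rw [add_comm, scalar_apply, smul_eq_mul_diagonal]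

lemma reverse_pow_of_domain [NoZeroDivisors S] (p : S[X]) (k : ℕ) :
    (p ^ k).reverse = p.reverse ^ k := by
  induction k with
  | zero => simpa using reverse_C (1 : S)
  | succ k ih => rw [pow_succ, pow_succ, reverse_mul_of_domain, ih]

lemma coeff_charpoly_neg_pow [IsDomain S] (M : Matrix N N S) {k n : ℕ}
    (hn : n ≤ k * Fintype.card N) :
    ((-M).charpoly ^ k).coeff n = (extPowTracePoly M ^ k).coeff (k * Fintype.card N - n) := by
  rw [extPowTracePoly_eq_charpolyRev_neg, ← reverse_charpoly, ← reverse_pow_of_domain,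
    coeff_reverse, natDegree_pow, charpoly_natDegree_eq_dim, revAt_le (Nat.sub_le _ _),
    Nat.sub_sub_self hn]

lemma norm_coeff_extPowTracePoly_pow {𝕜 : Type*} [RCLike 𝕜] {U : Matrix N N 𝕜}
    (hU : U ∈ unitaryGroup N 𝕜) {k n : ℕ} (hn : n ≤ k * Fintype.card N) :
    ‖(extPowTracePoly U ^ k).coeff (k * Fintype.card N - n)‖ =
      ‖(extPowTracePoly U ^ k).coeff n‖ := by
  have hdet : ‖U.det‖ = 1 := CStarRing.norm_of_mem_unitary (det_of_mem_unitary hU)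
  have hinv : U * Uᴴ = 1 := mem_unitaryGroup_iff.1 hU
  calc ‖(extPowTracePoly U ^ k).coeff (k * Fintype.card N - n)‖
      = ‖(extPowTracePoly Uᴴ ^ k).coeff (k * Fintype.card N - n)‖ := by
        rw [extPowTracePoly_conjTranspose, ← Polynomial.map_pow, coeff_map, RCLike.norm_conj]
    _ = ‖((-Uᴴ).charpoly ^ k).coeff n‖ := by rw [coeff_charpoly_neg_pow _ hn]
    _ = ‖(extPowTracePoly U ^ k).coeff n‖ := by
        rw [extPowTracePoly_eq_C_det_mul_charpoly hinv, mul_pow, ← C_pow, coeff_C_mul, norm_mul,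
          norm_pow, hdet, one_pow, one_mul]

lemma coeff_pow_eq_sum_antidiagonalTuple {S : Type*} [CommSemiring S] (p : S[X]) (k n : ℕ) :
    (p ^ k).coeff n = ∑ x ∈ Finset.Nat.antidiagonalTuple k n, ∏ i, p.coeff (x i) := by
  have h := PowerSeries.coeff_prod (fun _ : Fin k => (p : PowerSeries S)) n Finset.univ
  rw [Finset.prod_const, Finset.card_univ, Fintype.card_fin, ← coe_pow, coeff_coe] at h
  rw [h]
  exact Finset.sum_bij' (fun l _ => l) (fun x _ => Finsupp.equivFunOnFinite.symm x)
    (by simp [Finset.Nat.mem_antidiagonalTuple]) (by simp [Finset.Nat.mem_antidiagonalTuple])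
    (by simp) (by simp) (by simp)

end ExtPowTracePoly

section TensorPow

open Equiv Finset Matrix Kronecker

variable {α N K S : Type*} [Fintype α] [DecidableEq α] [Fintype N] [DecidableEq N]

section CommSemiring

variable [CommSemiring S]

variable (α) in
/-- The tensor power of a matrix indexed by `α`, acting on the tensor power of `N → S` in its
standard basis, which is indexed by the functions `α → N`. -/
def tensorPow : Matrix N N S →* Matrix (α → N) (α → N) S where
  toFun M := of fun I J => ∏ a, M (I a) (J a)
  map_one' := by
    ext I J
    simp only [of_apply, one_apply, prod_ite_zero, prod_const_one, mem_univ, true_imp_iff,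
      funext_iff]
  map_mul' M M' := by
    ext I J
    simp only [of_apply, mul_apply, prod_univ_sum, Fintype.piFinset_univ, prod_mul_distrib]

lemma tensorPow_apply (M : Matrix N N S) (I J : α → N) :
    tensorPow α M I J = ∏ a, M (I a) (J a) := rfl

lemma tensorPow_comp_perm (M : Matrix N N S) (I J : α → N) (π : Perm α) :
    tensorPow α M (I ∘ π) (J ∘ π) = tensorPow α M I J :=
  Equiv.prod_comp π fun a => M (I a) (J a)

lemma tensorPow_conjTranspose [StarRing S] (M : Matrix N N S) :
    tensorPow α Mᴴ = (tensorPow α M)ᴴ := by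
  ext I J
  simp only [conjTranspose_apply, tensorPow_apply, star_prod]

lemma tensorPow_diagonal (d : N → S) :
    tensorPow α (diagonal d) = diagonal fun I => ∏ a, d (I a) := by
  ext I J
  simp only [tensorPow_apply, diagonal_apply, prod_ite_zero, mem_univ, true_imp_iff, funext_iff]

lemma tensorPow_kronecker [Fintype K] [DecidableEq K] (M : Matrix N N S) (M' : Matrix K K S)
    (I J : α → N × K) :
    tensorPow α (M ⊗ₖ M') I J =
      tensorPow α M (Prod.fst ∘ I) (Prod.fst ∘ J) *
        tensorPow α M' (Prod.snd ∘ I) (Prod.snd ∘ J) :=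
  prod_mul_distrib

/-- The trace of `σ` composed with the tensor power of `M`, where `σ` permutes the tensor factors.
It is the product of the power sums `Tr (M ^ ℓ)` over the lengths `ℓ` of the cycles of `σ`. -/
def permTrace (σ : Perm α) (M : Matrix N N S) : S :=
  ∑ I : α → N, tensorPow α M (I ∘ σ) I

lemma permTrace_conj (σ π : Perm α) (M : Matrix N N S) :
    permTrace (π * σ * π⁻¹) M = permTrace σ M := by
  refine Fintype.sum_equiv (arrowCongr π.symm (Equiv.refl N)) _ _ fun I => ?_
  have hcomp : (I ∘ (π * σ * π⁻¹)) ∘ π = (I ∘ π) ∘ σ := funext fun a => by simp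
  rw [← tensorPow_comp_perm M _ I π, hcomp]
  rfl

lemma permTrace_kronecker [Fintype K] [DecidableEq K] (σ : Perm α) (M : Matrix N N S)
    (M' : Matrix K K S) :
    permTrace σ (M ⊗ₖ M') = permTrace σ M * permTrace σ M' := by
  rw [permTrace, permTrace, permTrace, sum_mul_sum, ← Fintype.sum_prod_type']
  exact Fintype.sum_equiv (arrowProdEquivProdArrow α (fun _ => N) fun _ => K) _ _ fun I =>
    tensorPow_kronecker M M' (I ∘ σ) I

lemma permTrace_one (σ : Perm α) :
    permTrace σ (1 : Matrix N N S) = #{f : α → N | f ∘ σ = f} := by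
  simp only [permTrace, map_one, one_apply, sum_boole]

lemma sum_permTrace_one :
    ∑ σ : Perm α, permTrace σ (1 : Matrix N N S) =
      (Fintype.card N).multichoose (Fintype.card α) * (Fintype.card α).factorial := by
  simp only [permTrace_one, ← Nat.cast_sum, sum_card_comp_perm_eq, Nat.cast_mul]

end CommSemiring

variable [CommRing S]

lemma factorial_mul_coeff_extPowTracePoly (M : Matrix N N S) :
    (Fintype.card α).factorial * (extPowTracePoly M).coeff (Fintype.card α) =
      ∑ σ : Perm α, (Perm.sign σ : S) * permTrace σ M := by
  simp only [← sum_det_submatrix, det_apply', submatrix_apply]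
  rw [sum_comm]
  exact sum_congr rfl fun σ _ => (mul_sum _ _ _).symm

variable (K) in
lemma factorial_mul_coeff_extPowTracePoly_pow [Fintype K] [DecidableEq K] (M : Matrix N N S) :
    (Fintype.card α).factorial *
        (extPowTracePoly M ^ Fintype.card K).coeff (Fintype.card α) =
      ∑ σ : Perm α, Perm.sign σ * permTrace σ (1 : Matrix K K S) * permTrace σ M := by
  rw [← extPowTracePoly_kronecker_one, factorial_mul_coeff_extPowTracePoly]
  exact sum_congr rfl fun σ _ => by rw [permTrace_kronecker, mul_comm (permTrace σ M), mul_assoc]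

lemma norm_sq_sign_mul_permTrace_one [Fintype K] [DecidableEq K] (σ : Perm α) :
    ‖(Perm.sign σ : ℂ) * permTrace σ (1 : Matrix K K ℂ)‖ ^ 2 =
      permTrace σ (1 : Matrix (K × K) (K × K) ℝ) := by
  have hsign : ‖(Perm.sign σ : ℂ)‖ = 1 := by
    rcases Int.units_eq_one_or (Perm.sign σ) with h | h <;> simp [h]
  rw [← one_kronecker_one, permTrace_kronecker, norm_mul, hsign, permTrace_one, permTrace_one,
    Complex.norm_natCast, one_mul, sq]

end TensorPow

section Commutant

open Equiv Finset Matrix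

lemma exists_orthonormalBasis_eq_norm_smul {𝕜 E ι : Type*} [RCLike 𝕜] [NormedAddCommGroup E]
    [InnerProductSpace 𝕜 E] [FiniteDimensional 𝕜 E] [Fintype ι] {v : ι → E}
    (hv : Pairwise fun i j => inner 𝕜 (v i) (v j) = 0)
    (hcard : Module.finrank 𝕜 E = Fintype.card ι) :
    ∃ b : OrthonormalBasis ι 𝕜 E, ∀ i, v i = (‖v i‖ : 𝕜) • b i := by
  have hnormalized : Orthonormal 𝕜
      ({i | v i ≠ 0}.domRestrict fun i => ((‖v i‖⁻¹ : ℝ) : 𝕜) • v i) := by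
    refine ⟨fun ⟨i, hi⟩ => ?_, fun i j hij => ?_⟩
    · simpa [norm_smul] using inv_mul_cancel₀ (norm_ne_zero_iff.2 hi)
    · simp [inner_smul_left, inner_smul_right, hv (Subtype.coe_ne_coe.2 hij)]
  obtain ⟨b, hb⟩ := hnormalized.exists_orthonormalBasis_extension_of_card_eq hcard
  refine ⟨b, fun i => ?_⟩
  rcases eq_or_ne (v i) 0 with hi | hi
  · simp [hi]
  · simp [hb i hi, smul_smul, hi]

variable {α N : Type*} [Fintype α] [Fintype N] [DecidableEq N]

lemma exists_eq_diagonal_mul_of_isDiag {𝕜 : Type*} [RCLike 𝕜] {M : Matrix N N 𝕜}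
    (hM : (M * Mᴴ).IsDiag) : ∃ d : N → 𝕜, ∃ U ∈ unitaryGroup N 𝕜, M = diagonal d * U := by
  obtain ⟨b, hb⟩ := exists_orthonormalBasis_eq_norm_smul (𝕜 := 𝕜)
    (v := fun i => WithLp.toLp 2 (M i)) (fun i j hij => hM hij.symm) (by simp)
  refine ⟨fun i => ‖WithLp.toLp 2 (M i)‖, of fun i j => b i j, ?_, ?_⟩
  · rw [mem_unitaryGroup_iff]
    ext i j
    exact (orthonormal_iff_ite.1 b.orthonormal j i).trans (by simp [one_apply, eq_comm])
  · ext i j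
    rw [diagonal_mul]
    exact congrArg (fun x : EuclideanSpace 𝕜 N => x j) (hb i)

-- A map `f : N → N` need not be injective, but its matrix is still a diagonal matrix times a
-- unitary one, so that the commutant of the unitary tensor powers also commutes with `f`.
lemma exists_submatrix_one_eq_diagonal_mul (𝕜 : Type*) [RCLike 𝕜] (f : N → N) :
    ∃ d : N → 𝕜, ∃ U ∈ unitaryGroup N 𝕜,
      (1 : Matrix N N 𝕜).submatrix id f = diagonal d * U := by
  refine exists_eq_diagonal_mul_of_isDiag fun i j hij => ?_
  refine sum_eq_zero fun l _ => ?_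
  by_cases hi : i = f l
  · simp [one_apply, ← hi, hij.symm]
  · simp [one_apply, hi]

lemma diagonal_mem_unitaryGroup {𝕜 : Type*} [RCLike 𝕜] {d : N → 𝕜} (hd : ∀ i, ‖d i‖ = 1) :
    diagonal d ∈ unitaryGroup N 𝕜 := by
  rw [mem_unitaryGroup_iff, star_eq_conjTranspose, diagonal_conjTranspose, diagonal_mul_diagonal,
    ← diagonal_one]
  congr 1
  ext i
  simp [RCLike.mul_conj, hd i]

variable [DecidableEq α]

lemma tensorPow_submatrix_one {S : Type*} [CommSemiring S] (f : N → N) (I J : α → N) :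
    tensorPow α ((1 : Matrix N N S).submatrix id f) I J = if I = f ∘ J then 1 else 0 := by
  simp only [tensorPow_apply, submatrix_apply, one_apply, id, prod_ite_zero, prod_const_one,
    mem_univ, true_imp_iff, funext_iff, Function.comp_apply]

variable {B : Matrix (α → N) (α → N) ℂ}

lemma exists_perm_of_apply_ne_zero
    (hB : ∀ U ∈ unitaryGroup N ℂ, Commute (tensorPow α U) B) {I J : α → N} (h : B I J ≠ 0) :
    ∃ π : Perm α, I = J ∘ π := by
  refine exists_perm_eq_comp_of_card_fiber_eq fun j => ?_
  -- The unitary matrix with `ζ` at the diagonal entry `j` and `1` elsewhere reads off the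
  -- cardinality of the fibre over `j` as the exponent of `ζ`.
  obtain ⟨ζ, hζ⟩ : ∃ ζ : ℂ, IsPrimitiveRoot ζ (Fintype.card α + 1) :=
    ⟨_, Complex.isPrimitiveRoot_exp _ (Nat.succ_ne_zero _)⟩
  have hd : diagonal (fun i => if i = j then ζ else 1) ∈ unitaryGroup N ℂ :=
    diagonal_mem_unitaryGroup fun i => by
      split_ifs
      exacts [hζ.norm'_eq_one (Nat.succ_ne_zero _), norm_one]
  have hpow : ζ ^ #{a | I a = j} = ζ ^ #{a | J a = j} := by
    have hcomm := congrFun₂ (hB _ hd).eq I J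
    rw [tensorPow_diagonal, diagonal_mul, mul_diagonal, mul_comm] at hcomm
    simpa [prod_ite] using mul_left_cancel₀ h hcomm
  exact hζ.pow_inj (Nat.lt_succ_of_le (card_le_univ _)) (Nat.lt_succ_of_le (card_le_univ _)) hpow

lemma commute_tensorPow_diagonal (hB : ∀ U ∈ unitaryGroup N ℂ, Commute (tensorPow α U) B)
    (d : N → ℂ) : Commute (tensorPow α (diagonal d)) B := by
  rw [tensorPow_diagonal]
  ext I J
  rw [diagonal_mul, mul_diagonal, mul_comm]
  rcases eq_or_ne (B I J) 0 with h | h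
  · rw [h, zero_mul, zero_mul]
  · obtain ⟨π, rfl⟩ := exists_perm_of_apply_ne_zero hB h
    exact congrArg _ (Equiv.prod_comp π fun a => d (J a))

lemma commute_tensorPow_submatrix_one
    (hB : ∀ U ∈ unitaryGroup N ℂ, Commute (tensorPow α U) B) (f : N → N) :
    Commute (tensorPow α ((1 : Matrix N N ℂ).submatrix id f)) B := by
  obtain ⟨d, U, hU, hf⟩ := exists_submatrix_one_eq_diagonal_mul ℂ f
  rw [hf, map_mul]
  exact (commute_tensorPow_diagonal hB d).mul_left (hB U hU)

lemma apply_comp_eq_sum_of_commute (hB : ∀ U ∈ unitaryGroup N ℂ, Commute (tensorPow α U) B)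
    (f : N → N) (I J : α → N) : B I (f ∘ J) = ∑ L, if I = f ∘ L then B L J else 0 := by
  have hcomm := congrFun₂ (commute_tensorPow_submatrix_one hB f).eq I J
  simpa [mul_apply, tensorPow_submatrix_one] using hcomm.symm

-- Schur–Weyl duality in coordinates: `B` is a combination of permutations of the tensor factors.
lemma apply_eq_sum_perm_of_commute (hB : ∀ U ∈ unitaryGroup N ℂ, Commute (tensorPow α U) B)
    (ι : α ↪ N) (I J : α → N) :
    B I J = ∑ π : Perm α, if I = J ∘ π then B (ι ∘ π) ι else 0 := by
  have hJ : Function.extend ι J id ∘ ι = J := Function.extend_comp ι.injective J id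
  have hinj : Function.Injective fun π : Perm α => (ι ∘ π : α → N) := fun π π' h =>
    Equiv.ext fun a => ι.injective (congrFun h a)
  calc B I J = ∑ L, if I = Function.extend ι J id ∘ L then B L ι else 0 := by
        rw [← apply_comp_eq_sum_of_commute hB, hJ]
    _ = ∑ π : Perm α, if I = Function.extend ι J id ∘ ι ∘ π then B (ι ∘ π) ι else 0 := by
        refine (Fintype.sum_of_injective _ hinj _ _ (fun L hL => ?_) fun π => rfl).symm
        have hLι : B L ι = 0 := by
          by_contra h
          obtain ⟨π, rfl⟩ := exists_perm_of_apply_ne_zero hB h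
          exact hL ⟨π, rfl⟩
        rw [hLι, ite_self]
    _ = _ := by simp only [← Function.comp_assoc, hJ]

end Commutant

section UnitaryAverage

lemma commute_integral_conj {G A : Type*} [Group G] [MeasurableSpace G] [MeasurableMul G]
    [NormedRing A] [NormedAlgebra ℝ A] (μ : Measure G) [μ.IsMulLeftInvariant]
    (ρ : G →* A) {a : A} (hρ : Integrable (fun g => ρ g * a * ρ g⁻¹) μ) (h : G) :
    Commute (ρ h) (∫ g, ρ g * a * ρ g⁻¹ ∂μ) := by
  have hconj (g : G) : ρ h * (ρ g * a * ρ g⁻¹) = ρ (h * g) * a * ρ (h * g)⁻¹ * ρ h := by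
    have hone : ρ h⁻¹ * ρ h = 1 := by rw [← map_mul, inv_mul_cancel, map_one]
    simp only [mul_inv_rev, map_mul, mul_assoc, hone, mul_one]
  calc ρ h * ∫ g, ρ g * a * ρ g⁻¹ ∂μ
      = ∫ g, ρ (h * g) * a * ρ (h * g)⁻¹ * ρ h ∂μ := by
        rw [← integral_const_mul_of_integrable hρ]
        simp only [hconj]
    _ = ∫ g, ρ g * a * ρ g⁻¹ * ρ h ∂μ :=
        integral_mul_left_eq_self (fun g => ρ g * a * ρ g⁻¹ * ρ h) h
    _ = (∫ g, ρ g * a * ρ g⁻¹ ∂μ) * ρ h := integral_mul_const_of_integrable hρ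

open Equiv Finset Matrix ComplexConjugate

instance unitaryGroup_compactSpace {N 𝕜 : Type*} [Fintype N] [DecidableEq N] [RCLike 𝕜] :
    CompactSpace (unitaryGroup N 𝕜) := by
  have hbox : IsCompact (Set.univ.pi fun _ => Set.univ.pi fun _ => Metric.closedBall 0 1 :
      Set (Matrix N N 𝕜)) :=
    isCompact_univ_pi fun _ => isCompact_univ_pi fun _ => isCompact_closedBall 0 1
  have hclosed : IsClosed (unitaryGroup N 𝕜 : Set (Matrix N N 𝕜)) := isClosed_unitary
  exact isCompact_iff_compactSpace.1 <| hbox.of_isClosed_subset hclosed fun U hU i _ j _ =>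
    mem_closedBall_zero_iff.2 (entry_norm_bound_of_unitary hU i j)

variable {α N : Type*} [Fintype α] [DecidableEq α] [Fintype N] [DecidableEq N]

@[fun_prop]
lemma continuous_tensorPow {S : Type*} [CommSemiring S] [TopologicalSpace S] [ContinuousMul S] :
    Continuous (tensorPow α : Matrix N N S → Matrix (α → N) (α → N) S) :=
  continuous_matrix fun I J => continuous_finsetProd _ fun a _ =>
    continuous_id.matrix_elem (I a) (J a)

@[fun_prop]
lemma continuous_permTrace {S : Type*} [CommSemiring S] [TopologicalSpace S]
    [IsTopologicalSemiring S] (σ : Perm α) : Continuous (permTrace σ : Matrix N N S → S) :=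
  continuous_finsetSum _ fun I _ => continuous_tensorPow.matrix_elem (I ∘ σ) I

lemma sum_tensorPow_comp_mul_conj {U : Matrix N N ℂ} (hU : U ∈ unitaryGroup N ℂ) (ι : α ↪ N)
    (ρ : Perm α) :
    ∑ J, tensorPow α U (ι ∘ ρ) J * conj (tensorPow α U ι J) = if ρ = 1 then 1 else 0 := by
  have hunitary : tensorPow α U * (tensorPow α U)ᴴ = 1 := by
    rw [← tensorPow_conjTranspose, ← map_mul, ← star_eq_conjTranspose,
      mem_unitaryGroup_iff.1 hU, map_one]
  have hone : (ι ∘ ρ : α → N) = ι ↔ ρ = 1 :=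
    ⟨fun h => Equiv.ext fun a => ι.injective (congrFun h a), fun h => h ▸ rfl⟩
  simpa only [mul_apply, conjTranspose_apply, one_apply, hone, starRingEnd_apply] using
    congrFun₂ hunitary (ι ∘ ρ) ι

variable [MeasurableSpace (unitaryGroup N ℂ)] [BorelSpace (unitaryGroup N ℂ)]
  (μ : Measure (unitaryGroup N ℂ)) [IsFiniteMeasureOnCompacts μ]

lemma integrable_of_continuous {E : Type*} [NormedAddCommGroup E] {f : unitaryGroup N ℂ → E}
    (hf : Continuous f) : Integrable f μ :=
  hf.integrable_of_hasCompactSupport (.of_compactSpace f)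

open scoped Matrix.Norms.L2Operator in
/-- The average of the conjugates of `A` by the tensor powers of unitary matrices. -/
noncomputable def twirl (A : Matrix (α → N) (α → N) ℂ) : Matrix (α → N) (α → N) ℂ :=
  ∫ θ : unitaryGroup N ℂ, tensorPow α θ.1 * A * (tensorPow α θ.1)ᴴ ∂μ

open scoped Matrix.Norms.L2Operator in
lemma twirl_single_apply (I J K L : α → N) :
    twirl μ (single J L 1) I K =
      ∫ θ : unitaryGroup N ℂ, tensorPow α θ.1 I J *
        conj (tensorPow α θ.1 K L) ∂μ := by
  have hint : Integrable (fun θ : unitaryGroup N ℂ => tensorPow α θ.1 *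
    single J L 1 * (tensorPow α θ.1)ᴴ) μ :=
    integrable_of_continuous μ (by fun_prop)
  rw [twirl]
  refine ((entryLinearMap ℂ ℂ I K).toContinuousLinearMap.integral_comp_comm hint).symm.trans ?_
  refine integral_congr_ae (.of_forall fun θ => ?_)
  simp [mul_apply, single_apply, ite_and]

variable [μ.IsMulLeftInvariant]

open scoped Matrix.Norms.L2Operator in
lemma commute_tensorPow_twirl (A : Matrix (α → N) (α → N) ℂ) {U : Matrix N N ℂ}
    (hU : U ∈ unitaryGroup N ℂ) : Commute (tensorPow α U) (twirl μ A) := by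
  have h := commute_integral_conj μ ((tensorPow α).comp (unitaryGroup N ℂ).subtype) (a := A)
    (integrable_of_continuous μ (by
      simp only [MonoidHom.comp_apply, Submonoid.subtype_apply, UnitaryGroup.inv_val]
      fun_prop)) ⟨U, hU⟩
  simpa [twirl, ← tensorPow_conjTranspose, star_eq_conjTranspose] using h

lemma integral_tensorPow_mul_conj (ι : α ↪ N) (I J K L : α → N) :
    ∫ θ : unitaryGroup N ℂ, tensorPow α θ.1 I J *
        conj (tensorPow α θ.1 K L) ∂μ =
      ∑ π : Perm α, if I = K ∘ π then
        ∫ θ : unitaryGroup N ℂ, tensorPow α θ.1 (ι ∘ π) J *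
          conj (tensorPow α θ.1 ι L) ∂μ else 0 := by
  simp only [← twirl_single_apply]
  exact apply_eq_sum_perm_of_commute (fun U hU => commute_tensorPow_twirl μ _ hU) ι I K

lemma sum_integral_tensorPow_mul_conj (ι : α ↪ N) (σ : Perm α) (K L : α → N) :
    ∑ I : α → N, ∫ θ : unitaryGroup N ℂ,
        tensorPow α θ.1 (I ∘ σ) I * conj (tensorPow α θ.1 K L) ∂μ =
      ∑ π : Perm α, ∫ θ : unitaryGroup N ℂ,
        tensorPow α θ.1 (ι ∘ π) ((K ∘ π) ∘ σ.symm) * conj (tensorPow α θ.1 ι L) ∂μ := by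
  rw [sum_congr rfl fun I _ => integral_tensorPow_mul_conj μ ι (I ∘ σ) I K L, sum_comm]
  simp only [← eq_comp_symm, sum_ite_eq', mem_univ, if_true]

end UnitaryAverage

section PowerSumMoments

open Equiv Finset Matrix ComplexConjugate

variable {α N : Type*} [Fintype α] [DecidableEq α] [Fintype N] [DecidableEq N]
  [MeasurableSpace (unitaryGroup N ℂ)] [BorelSpace (unitaryGroup N ℂ)]
  (μ : Measure (unitaryGroup N ℂ)) [IsProbabilityMeasure μ] [μ.IsMulLeftInvariant]

lemma integral_permTrace_mul_conj (ι : α ↪ N) (σ τ : Perm α) :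
    ∫ θ : unitaryGroup N ℂ, permTrace σ θ.1 * conj (permTrace τ θ.1) ∂μ =
      #{π : Perm α | π * σ * π⁻¹ = τ} := by
  have hint (I J K L : α → N) : Integrable (fun θ : unitaryGroup N ℂ =>
      tensorPow α θ.1 I J * conj (tensorPow α θ.1 K L)) μ :=
    integrable_of_continuous μ (by fun_prop)
  have hreindex (K : α → N) (π : Perm α) (θ : unitaryGroup N ℂ) :
      tensorPow α θ.1 (ι ∘ π) (((K ∘ τ) ∘ π) ∘ σ.symm) =
        tensorPow α θ.1 (ι ∘ (π * σ * π⁻¹ * τ⁻¹ : Perm α)) K := by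
    have hK : (((K ∘ τ) ∘ π) ∘ σ.symm) ∘ (σ * π⁻¹ * τ⁻¹ : Perm α) = K := by
      ext a
      simp
    rw [← tensorPow_comp_perm θ.1 (ι ∘ π) _ (σ * π⁻¹ * τ⁻¹), hK]
    rfl
  calc ∫ θ : unitaryGroup N ℂ, permTrace σ θ.1 * conj (permTrace τ θ.1) ∂μ
      = ∑ K : α → N, ∑ I : α → N, ∫ θ : unitaryGroup N ℂ,
          tensorPow α θ.1 (I ∘ σ) I * conj (tensorPow α θ.1 (K ∘ τ) K) ∂μ := by
        simp only [permTrace, map_sum, sum_mul_sum]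
        rw [integral_finsetSum _ fun _ _ => integrable_finsetSum _ fun _ _ => hint _ _ _ _,
          sum_comm]
        simp only [integral_finsetSum _ fun _ _ => hint _ _ _ _]
    _ = ∑ K : α → N, ∑ π : Perm α, ∫ θ : unitaryGroup N ℂ,
          tensorPow α θ.1 (ι ∘ (π * σ * π⁻¹ * τ⁻¹ : Perm α)) K *
            conj (tensorPow α θ.1 ι K) ∂μ := by
        simp only [sum_integral_tensorPow_mul_conj μ ι, hreindex]
    _ = ∑ π : Perm α, ∫ θ : unitaryGroup N ℂ, ∑ K : α → N,
          tensorPow α θ.1 (ι ∘ (π * σ * π⁻¹ * τ⁻¹ : Perm α)) K *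
            conj (tensorPow α θ.1 ι K) ∂μ := by
        simp only [integral_finsetSum _ fun _ _ => hint _ _ _ _]
        exact sum_comm
    _ = #{π : Perm α | π * σ * π⁻¹ = τ} := by
        simp only [sum_tensorPow_comp_mul_conj (Subtype.prop _), mul_inv_eq_one, integral_const,
          probReal_univ, one_smul, sum_boole]

lemma integral_norm_sq_sum_mul_permTrace (ι : α ↪ N) {c : Perm α → ℂ}
    (hc : ∀ σ π, c (π * σ * π⁻¹) = c σ) :
    ∫ θ : unitaryGroup N ℂ, ‖∑ σ, c σ * permTrace σ θ.1‖ ^ 2 ∂μ =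
      (Fintype.card α).factorial * ∑ σ, ‖c σ‖ ^ 2 := by
  have hexpand (θ : unitaryGroup N ℂ) : ((‖∑ σ, c σ * permTrace σ θ.1‖ ^ 2 : ℝ) : ℂ) =
      ∑ σ, ∑ τ, c σ * conj (c τ) * (permTrace σ θ.1 * conj (permTrace τ θ.1)) := by
    rw [Complex.ofReal_pow, ← Complex.mul_conj', map_sum, sum_mul_sum]
    simp only [map_mul, mul_mul_mul_comm]
  have hint (σ τ : Perm α) : Integrable (fun θ : unitaryGroup N ℂ =>
      c σ * conj (c τ) * (permTrace σ θ.1 * conj (permTrace τ θ.1))) μ :=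
    integrable_of_continuous μ (by fun_prop)
  apply Complex.ofReal_injective
  calc ((∫ θ : unitaryGroup N ℂ, ‖∑ σ, c σ * permTrace σ θ.1‖ ^ 2 ∂μ : ℝ) : ℂ)
      = ∑ σ, ∑ τ, c σ * conj (c τ) * #{π : Perm α | π * σ * π⁻¹ = τ} := by
        rw [← integral_complex_ofReal]
        simp only [hexpand]
        rw [integral_finsetSum _ fun σ _ => integrable_finsetSum _ fun τ _ => hint σ τ]
        simp only [integral_finsetSum _ fun τ _ => hint _ τ, integral_const_mul,
          integral_permTrace_mul_conj μ ι]
    _ = ∑ σ, ∑ π : Perm α, c σ * conj (c (π * σ * π⁻¹)) := by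
        refine sum_congr rfl fun σ _ => ?_
        simp only [card_eq_sum_ones, Nat.cast_sum, mul_sum, sum_filter]
        rw [sum_comm]
        simp
    _ = _ := by
        simp [hc, Complex.mul_conj', Fintype.card_perm, mul_sum]

lemma integral_norm_sq_coeff_extPowTracePoly_pow (k : ℕ) {m : ℕ} (hm : m ≤ Fintype.card N) :
    ∫ θ : unitaryGroup N ℂ, ‖(extPowTracePoly θ.1 ^ k).coeff m‖ ^ 2 ∂μ =
      (k ^ 2).multichoose m := by
  obtain ⟨ι⟩ : Nonempty (Fin m ↪ N) := Function.Embedding.nonempty_of_card_le (by simpa using hm)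
  let c (σ : Perm (Fin m)) : ℂ := Perm.sign σ * permTrace σ (1 : Matrix (Fin k) (Fin k) ℂ)
  have hc (σ π : Perm (Fin m)) : c (π * σ * π⁻¹) = c σ := by
    have hsign : Perm.sign (π * σ * π⁻¹) = Perm.sign σ := by
      rw [Perm.sign_mul, Perm.sign_mul, Perm.sign_inv, mul_right_comm, Int.units_mul_self, one_mul]
    simp only [c, permTrace_conj, hsign]
  have hcoeff (θ : unitaryGroup N ℂ) : m.factorial * (extPowTracePoly θ.1 ^ k).coeff m =
      ∑ σ, c σ * permTrace σ θ.1 := by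
    simpa only [Fintype.card_fin] using
      factorial_mul_coeff_extPowTracePoly_pow (α := Fin m) (Fin k) θ.1
  have hfactorial : (m.factorial : ℝ) ≠ 0 := Nat.cast_ne_zero.2 m.factorial_ne_zero
  refine mul_left_cancel₀ (pow_ne_zero 2 hfactorial) ?_
  calc (m.factorial : ℝ) ^ 2 * ∫ θ : unitaryGroup N ℂ, ‖(extPowTracePoly θ.1 ^ k).coeff m‖ ^ 2 ∂μ
      = ∫ θ : unitaryGroup N ℂ, ‖∑ σ, c σ * permTrace σ θ.1‖ ^ 2 ∂μ := by
        simp only [← hcoeff, norm_mul, mul_pow, integral_const_mul, Complex.norm_natCast]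
    _ = m.factorial * ∑ σ, ‖c σ‖ ^ 2 := by
        rw [integral_norm_sq_sum_mul_permTrace μ ι hc, Fintype.card_fin]
    _ = m.factorial * ∑ σ : Perm (Fin m),
          permTrace σ (1 : Matrix (Fin k × Fin k) (Fin k × Fin k) ℝ) := by
        simp only [c, norm_sq_sign_mul_permTrace_one]
    _ = (m.factorial : ℝ) ^ 2 * (k ^ 2).multichoose m := by
        rw [sum_permTrace_one, Fintype.card_prod, Fintype.card_fin, Fintype.card_fin]
        ring_nf

end PowerSumMoments

section MatrixIntegral

variable {k n R : ℕ} (μ : Measure (Matrix.unitaryGroup (Fin R) ℂ))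

lemma matrixIntegral_eq_integral_norm_sq_coeff :
    matrixIntegral k n R μ = ∫ θ, ‖(extPowTracePoly θ.1 ^ k).coeff n‖ ^ 2 ∂μ := by
  simp only [coeff_pow_eq_sum_antidiagonalTuple]
  rfl

lemma matrixIntegral_sub (hn : n ≤ k * R) :
    matrixIntegral k (k * R - n) R μ = matrixIntegral k n R μ := by
  have hsymm (θ : Matrix.unitaryGroup (Fin R) ℂ) :=
    norm_coeff_extPowTracePoly_pow θ.2 (k := k) (n := n) (by simpa using hn)
  simp only [Fintype.card_fin] at hsymm
  simp only [matrixIntegral_eq_integral_norm_sq_coeff, hsymm]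

variable [IsProbabilityMeasure μ] [μ.IsMulLeftInvariant]

lemma matrixIntegral_of_le (hn : n ≤ R) : matrixIntegral k n R μ = (k ^ 2).multichoose n := by
  rw [matrixIntegral_eq_integral_norm_sq_coeff]
  exact integral_norm_sq_coeff_extPowTracePoly_pow μ k (by simpa using hn)

end MatrixIntegral

lemma multichoose_eq_choose_pred {d : ℕ} (hd : 1 ≤ d) (m : ℕ) :
    d.multichoose m = (m + d - 1).choose (d - 1) := by
  rw [Nat.multichoose_eq, add_comm, Nat.choose_symm_of_eq_add]
  omega

theorem I_k_eq_choose_of_large_n_general {k R n : ℕ} (hk : 1 ≤ k) (h1 : (k - 1) * R ≤ n)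
    (h2 : n ≤ k * R) (μ : Measure (Matrix.unitaryGroup (Fin R) ℂ)) [IsProbabilityMeasure μ]
    [μ.IsMulLeftInvariant] :
    matrixIntegral k n R μ = Nat.choose (k * R - n + k ^ 2 - 1) (k ^ 2 - 1) := by
  have hle : k * R - n ≤ R := by
    have hsucc : (k - 1) * R + R = k * R := by rw [← Nat.succ_mul, Nat.succ_eq_add_one,
      Nat.sub_add_cancel hk]
    omega
  rw [← matrixIntegral_sub μ h2, matrixIntegral_of_le μ hle,
    multichoose_eq_choose_pred (Nat.one_le_pow _ _ hk)]

theorem I_k_eq_choose_of_large_n (k R n : ℕ) (hk : 1 ≤ k) (hR : 1 ≤ R)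
    (h1 : (k - 1) * R < n) (h2 : n < k * R)
    (μ : Measure (Matrix.unitaryGroup (Fin R) ℂ))
    (hμ : μ.IsHaarMeasure) (hprob : IsProbabilityMeasure μ) :
    matrixIntegral k n R μ = Nat.choose (k * R - n + k ^ 2 - 1) (k ^ 2 - 1) :=
  I_k_eq_choose_of_large_n_general hk h1.le h2.le μ
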